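/- For every integer n ≥ 5 there exists a finite matroid M such that M satisfies the (n−1)-th Kinser inequality for every family of n−1 subsets of its ground set, but M violates the n-th Kinser inequality for some family of n subsets of its ground set. In other words, for every n ≥ 5 the containment K_n ⊆ K_{n−1} is proper. -/

import Mathlib

open Finset

universe u v

namespace Matroid

variable {α : Type*}

/-- The rank of a set in a matroid: the cardinality of a largest independent subset. -/
noncomputable def rnk (M : Matroid α) (X : Set α) : ℕ :=
  sSup {n : ℕ | ∃ I, M.Indep I ∧ I ⊆ X ∧ I.ncard = n}

/-- The `n`-th Kinser inequality for the family `X 1, …, X n`. -/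
def KinserIneq (M : Matroid α) (n : ℕ) (X : ℕ → Set α) : Prop :=
  (∑ i ∈ Finset.Icc 3 n, M.rnk (X i)) + M.rnk (X 1 ∪ X 2) + M.rnk (X 1 ∪ X 3 ∪ X n)
      + ∑ i ∈ Finset.Icc 4 n, M.rnk (X 2 ∪ X (i - 1) ∪ X i)
    ≤ M.rnk (X 1 ∪ X 3) + M.rnk (X 1 ∪ X n)
      + (∑ i ∈ Finset.Icc 3 n, M.rnk (X 2 ∪ X i))
      + ∑ i ∈ Finset.Icc 4 n, M.rnk (X (i - 1) ∪ X i)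

/-- `M` lies in the Kinser class `K n`: the `n`-th Kinser inequality holds for every
family of `n` subsets of the ground set. -/
def MemKinserClass (M : Matroid α) (n : ℕ) : Prop :=
  ∀ X : ℕ → Set α, (∀ i ∈ Finset.Icc 1 n, X i ⊆ M.E) → M.KinserIneq n X

/-- `M` is (isomorphic to) the matroid of linear dependence of a family of vectors of a
vector space over `𝔽`. -/
def IsRepOver {α : Type u} (M : Matroid α) (𝔽 : Type v) [Field 𝔽] : Prop :=
  ∃ (W : Type (max u v)) (_ : AddCommGroup W) (_ : Module 𝔽 W) (φ : α → W),
    ∀ I : Set α, M.Indep I ↔ I ⊆ M.E ∧ LinearIndependent 𝔽 (fun x : I => φ x.1)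

/-- Deletion of a set of elements from a matroid. -/
def del (M : Matroid α) (D : Set α) : Matroid α := M ↾ (M.E \ D)

/-- Contraction of a set of elements in a matroid. -/
def con (M : Matroid α) (C : Set α) : Matroid α := (M✶ ↾ (M✶.E \ C))✶

/-- `N` is a minor of `M`: it is obtained from `M` by contractions and deletions. -/
def IsMinorOf (N M : Matroid α) : Prop :=
  ∃ C D : Set α, C ⊆ M.E ∧ D ⊆ M.E ∧ Disjoint C D ∧ N = (M.con C).del D

/-- `N` is a proper minor of `M`: at least one element is deleted or contracted. -/
def IsProperMinorOf (N M : Matroid α) : Prop :=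
  ∃ C D : Set α, C ⊆ M.E ∧ D ⊆ M.E ∧ Disjoint C D ∧ (C ∪ D).Nonempty ∧
    N = (M.con C).del D

/-- A matroid isomorphism: a bijection of ground sets preserving independence. -/
def IsIsoTo {β : Type*} (M : Matroid α) (N : Matroid β) : Prop :=
  ∃ f : α → β, Set.BijOn f M.E N.E ∧ ∀ I ⊆ M.E, (M.Indep I ↔ N.Indep (f '' I))

/-- The Ingleton inequality (the 4th Kinser inequality) for four subsets. -/
def IngletonIneq (M : Matroid α) (X₁ X₂ X₃ X₄ : Set α) : Prop :=
  M.rnk X₃ + M.rnk X₄ + M.rnk (X₁ ∪ X₂) + M.rnk (X₁ ∪ X₃ ∪ X₄) + M.rnk (X₂ ∪ X₃ ∪ X₄)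
    ≤ M.rnk (X₁ ∪ X₃) + M.rnk (X₁ ∪ X₄) + M.rnk (X₂ ∪ X₃) + M.rnk (X₂ ∪ X₄)
      + M.rnk (X₃ ∪ X₄)

end Matroid

/-!
Put `m = n - 1`. The witness is a sparse paving matroid of rank `m + 1` with two hubs `U` and a
cycle of sets `V i`, `i ∈ ZMod m`, in which all `V i ∪ V (i + 1)` and all `U ∪ V i` with `i ≠ 0` are
circuit-hyperplanes, `2 * m - 1` in total. If `U ∪ V 0` were one as well, the family
`V 0, U, V 1, …, V (m - 1)` would attain equality in the `(m + 1)`-st Kinser inequality; relaxing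
it makes the inequality fail by one.

The `m`-th inequality has only `2 * m - 3` terms on its larger side, so some circuit-hyperplane `H`
is not among them. Relaxing `H` changes none of these terms and lowers no rank, so it suffices that
every relaxation satisfies the inequality. In fact every relaxation is representable. In a space
with coordinates `none` and `some j`, let `x j` be unit vectors, let `U` span the all-ones vector
and the direction `none`, and let `y i` have prescribed ratios (slopes) `a i` and `b i` of the
coordinates `some i` and `some (i + 1)` to the coordinate `none`. Then `V i ∪ V (i + 1)` is
dependent iff `b i = a (i + 1)`, and `U ∪ V i` is dependent iff `a i = b i`. Around a cycle it is
impossible that exactly one of these equalities fails, but any two can fail alone. With the other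
entries generic there are no further dependent sets of size `m + 1`: setting the slopes to `0`, a
matching argument specializes the entries so that the vectors form a basis.
-/

namespace Matroid

section Rank

variable {α : Type*} {M : Matroid α} {I X : Set α}

lemma rnk_eq_ncard_of_isBasis' [M.RankFinite] (hI : M.IsBasis' I X) : M.rnk X = I.ncard := by
  refine IsGreatest.csSup_eq ⟨⟨I, hI.indep, hI.subset, rfl⟩, ?_⟩
  rintro _ ⟨J, hJ, hJX, rfl⟩
  refine ENat.toNat_le_toNat ?_ hI.indep.finite.encard_lt_top.ne
  rw [hI.encard_eq_eRk]
  exact hJ.encard_le_eRk_of_subset hJX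

lemma cast_rnk (M : Matroid α) [M.RankFinite] (X : Set α) : (M.rnk X : ℕ∞) = M.eRk X := by
  obtain ⟨I, hI⟩ := M.exists_isBasis' X
  rw [rnk_eq_ncard_of_isBasis' hI, ← hI.encard_eq_eRk, hI.indep.finite.cast_ncard_eq]

end Rank

section Subspaces

open Module

variable {K V : Type*} [DivisionRing K] [AddCommGroup V] [Module K V]

lemma finrank_add_finrank_sup_add_finrank_le {P Q Z : Submodule K V} (T : Submodule K V)
    [FiniteDimensional K P] [FiniteDimensional K Q] [FiniteDimensional K T]
    (hZP : Z ≤ P) (hZQ : Z ≤ Q) :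
    finrank K T + finrank K ↥(P ⊔ Q ⊔ T) + finrank K Z ≤
      finrank K ↥(P ⊔ T) + finrank K ↥(Q ⊔ T) + finrank K ↥(Z ⊓ T) := by
  have : FiniteDimensional K Z := Submodule.finiteDimensional_of_le hZP
  have modular_sup := Submodule.finrank_sup_add_finrank_inf_eq (P ⊔ T) (Q ⊔ T)
  have modular_inf := Submodule.finrank_sup_add_finrank_inf_eq Z T
  have mono : finrank K ↥(Z ⊔ T) ≤ finrank K ↥((P ⊔ T) ⊓ (Q ⊔ T)) :=
    Submodule.finrank_mono <| le_inf (sup_le_sup_right hZP T) (sup_le_sup_right hZQ T)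
  rw [← sup_sup_distrib_right] at modular_sup
  lia

lemma sum_finrank_le_sum_finrank_add_finrank_inf (U : ℕ → Submodule K V)
    [∀ i, FiniteDimensional K (U i)] {n : ℕ} (hn : 3 ≤ n) :
    (∑ i ∈ Icc 3 n, finrank K (U i)) + finrank K (U 2)
        + ∑ i ∈ Icc 4 n, finrank K ↥(U 2 ⊔ U (i - 1) ⊔ U i) ≤
      (∑ i ∈ Icc 3 n, finrank K ↥(U 2 ⊔ U i))
        + (∑ i ∈ Icc 4 n, finrank K ↥(U (i - 1) ⊔ U i)) + finrank K ↥((Icc 2 n).inf U) := by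
  induction n, hn using Nat.le_induction with
  | base =>
    have modular := Submodule.finrank_sup_add_finrank_inf_eq (U 2) (U 3)
    rw [show Icc 2 3 = {2, 3} from rfl, inf_insert, inf_singleton]
    simp only [Icc_self, sum_singleton, Icc_eq_empty_of_lt (show 3 < 4 by simp), sum_empty]
    lia
  | succ n hn ih =>
    have step := finrank_add_finrank_sup_add_finrank_le (U (n + 1))
      (inf_le (f := U) (left_mem_Icc.2 (by lia : 2 ≤ n)))
      (inf_le (f := U) (right_mem_Icc.2 (by lia : 2 ≤ n)))
    rw [← insert_Icc_right_eq_Icc_add_one (by lia : 2 ≤ n + 1), inf_insert, inf_comm (U (n + 1))]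
    simp only [sum_Icc_succ_top (by lia : 3 ≤ n + 1), sum_Icc_succ_top (by lia : 4 ≤ n + 1)]
    rw [Nat.add_sub_cancel]
    lia

theorem kinser_finrank (U : ℕ → Submodule K V) [∀ i, FiniteDimensional K (U i)] {n : ℕ}
    (hn : 3 ≤ n) :
    (∑ i ∈ Icc 3 n, finrank K (U i)) + finrank K ↥(U 1 ⊔ U 2) + finrank K ↥(U 1 ⊔ U 3 ⊔ U n)
        + ∑ i ∈ Icc 4 n, finrank K ↥(U 2 ⊔ U (i - 1) ⊔ U i) ≤
      finrank K ↥(U 1 ⊔ U 3) + finrank K ↥(U 1 ⊔ U n)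
        + (∑ i ∈ Icc 3 n, finrank K ↥(U 2 ⊔ U i))
        + ∑ i ∈ Icc 4 n, finrank K ↥(U (i - 1) ⊔ U i) := by
  have inf_U_le {i : ℕ} (hi : i ∈ Icc 2 n) : (Icc 2 n).inf U ≤ U i := inf_le hi
  have chain := sum_finrank_le_sum_finrank_add_finrank_inf U hn
  have step := finrank_add_finrank_sup_add_finrank_le (U 1)
    (inf_U_le (mem_Icc.2 ⟨by simp, hn⟩ : 3 ∈ _)) (inf_U_le (right_mem_Icc.2 (by lia)))
  have modular := Submodule.finrank_sup_add_finrank_inf_eq (U 1) (U 2)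
  have mono : finrank K ↥((Icc 2 n).inf U ⊓ U 1) ≤ finrank K ↥(U 1 ⊓ U 2) :=
    Submodule.finrank_mono <| le_inf inf_le_right <|
      inf_le_left.trans (inf_U_le (left_mem_Icc.2 (by lia)))
  rw [sup_comm _ (U 1), ← sup_assoc, sup_comm _ (U 1), sup_comm _ (U 1)] at step
  lia

end Subspaces

section Representation

open Module Submodule

variable {α : Type*} {𝔽 W : Type*} [Field 𝔽] [AddCommGroup W] [Module 𝔽 W] {M : Matroid α}
  {φ : α → W}

lemma span_image_eq_of_isBasis'
    (hφ : ∀ I : Set α, M.Indep I ↔ I ⊆ M.E ∧ LinearIndepOn 𝔽 φ I) {I X : Set α}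
    (hI : M.IsBasis' I X) : span 𝔽 (φ '' (X ∩ M.E)) = span 𝔽 (φ '' I) := by
  have hIE := hI.indep.subset_ground
  refine le_antisymm (span_le.2 ?_) (span_mono (Set.image_mono (Set.subset_inter hI.subset hIE)))
  rintro _ ⟨x, ⟨hxX, hxE⟩, rfl⟩
  by_contra hx
  have insert_indep : M.Indep (insert x I) :=
    (hφ _).2 ⟨Set.insert_subset hxE hIE, ((hφ I).1 hI.indep).2.insert hx⟩
  exact hx (subset_span (Set.mem_image_of_mem φ (hI.mem_of_insert_indep hxX insert_indep)))

variable [M.RankFinite]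

lemma finiteDimensional_span_image
    (hφ : ∀ I : Set α, M.Indep I ↔ I ⊆ M.E ∧ LinearIndepOn 𝔽 φ I) (X : Set α) :
    FiniteDimensional 𝔽 (span 𝔽 (φ '' (X ∩ M.E))) := by
  obtain ⟨I, hI⟩ := M.exists_isBasis' X
  rw [span_image_eq_of_isBasis' hφ hI]
  exact .span_of_finite 𝔽 (hI.indep.finite.image φ)

lemma rnk_eq_finrank_span_image
    (hφ : ∀ I : Set α, M.Indep I ↔ I ⊆ M.E ∧ LinearIndepOn 𝔽 φ I) (X : Set α) :
    M.rnk X = finrank 𝔽 (span 𝔽 (φ '' (X ∩ M.E))) := by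
  obtain ⟨I, hI⟩ := M.exists_isBasis' X
  have := hI.indep.finite.fintype
  rw [span_image_eq_of_isBasis' hφ hI, rnk_eq_ncard_of_isBasis' hI, Set.image_eq_range,
    finrank_span_eq_card ((hφ I).1 hI.indep).2, ← Nat.card_coe_set_eq, Nat.card_eq_fintype_card]

theorem IsRepOver.memKinserClass (h : M.IsRepOver 𝔽) {n : ℕ} (hn : 3 ≤ n) :
    M.MemKinserClass n := by
  obtain ⟨W, _, _, φ, hφ⟩ := h
  intro X _
  have (i : ℕ) : FiniteDimensional 𝔽 (span 𝔽 (φ '' (X i ∩ M.E))) :=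
    finiteDimensional_span_image hφ (X i)
  have rnk_union (Y Z : Set α) : M.rnk (Y ∪ Z) =
      finrank 𝔽 ↥(span 𝔽 (φ '' (Y ∩ M.E)) ⊔ span 𝔽 (φ '' (Z ∩ M.E))) := by
    rw [rnk_eq_finrank_span_image hφ, Set.union_inter_distrib_right, Set.image_union, span_union]
  have rnk_union₃ (Y Z T : Set α) : M.rnk (Y ∪ Z ∪ T) = finrank 𝔽 ↥(span 𝔽 (φ '' (Y ∩ M.E)) ⊔
      span 𝔽 (φ '' (Z ∩ M.E)) ⊔ span 𝔽 (φ '' (T ∩ M.E))) := by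
    rw [rnk_union, Set.union_inter_distrib_right, Set.image_union, span_union]
  simpa only [KinserIneq, rnk_union₃, rnk_union, rnk_eq_finrank_span_image hφ (X _)] using
    kinser_finrank (fun i ↦ span 𝔽 (φ '' (X i ∩ M.E))) hn

end Representation

section Relaxation

variable {α : Type*} {M : Matroid α}

lemma kinserIneq_of_rnk_le {N : Matroid α} {n : ℕ} {X : ℕ → Set α} (hN : N.KinserIneq n X)
    (hle : ∀ Y, M.rnk Y ≤ N.rnk Y) (h₁₃ : N.rnk (X 1 ∪ X 3) ≤ M.rnk (X 1 ∪ X 3))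
    (h₁ₙ : N.rnk (X 1 ∪ X n) ≤ M.rnk (X 1 ∪ X n))
    (h₂ : ∀ i ∈ Icc 3 n, N.rnk (X 2 ∪ X i) ≤ M.rnk (X 2 ∪ X i))
    (h_consec : ∀ i ∈ Icc 4 n, N.rnk (X (i - 1) ∪ X i) ≤ M.rnk (X (i - 1) ∪ X i)) :
    M.KinserIneq n X := by
  refine le_trans ?_ (hN.trans ?_)
  · gcongr <;> apply hle
  · gcongr with i hi i hi
    exacts [h₂ i hi, h_consec i hi]

theorem memKinserClass_of_relaxations {n : ℕ} (hn : 3 ≤ n) {𝓗 : Set (Set α)}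
    (hcard : 2 * n - 3 < 𝓗.ncard)
    (h𝓗 : ∀ H ∈ 𝓗, ∃ N : Matroid α, N.E = M.E ∧ N.MemKinserClass n ∧
      (∀ X, M.rnk X ≤ N.rnk X) ∧ ∀ X ≠ H, N.rnk X ≤ M.rnk X) :
    M.MemKinserClass n := by
  classical
  intro X hX
  let larger : Finset (Set α) := {X 1 ∪ X 3, X 1 ∪ X n} ∪
    ((Icc 3 n).image (fun i ↦ X 2 ∪ X i) ∪ (Icc 4 n).image (fun i ↦ X (i - 1) ∪ X i))
  have card_larger : #larger ≤ 2 + ((n + 1 - 3) + (n + 1 - 4)) := by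
    simp only [← Nat.card_Icc]
    exact (card_union_le _ _).trans <| add_le_add card_le_two <|
      (card_union_le _ _).trans (add_le_add card_image_le card_image_le)
  obtain ⟨H, hH, hH_notMem⟩ : ∃ H ∈ 𝓗, H ∉ (larger : Set (Set α)) := by
    refine Set.exists_mem_notMem_of_ncard_lt_ncard ?_ larger.finite_toSet
    rw [Set.ncard_coe_finset]
    lia
  obtain ⟨N, hNE, hN, hle, hge⟩ := h𝓗 H hH
  have rnk_le {Y : Set α} (hY : Y ∈ larger) : N.rnk Y ≤ M.rnk Y :=
    hge Y fun hYH ↦ hH_notMem (hYH ▸ hY)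
  refine kinserIneq_of_rnk_le (hN X fun i hi ↦ hNE ▸ hX i hi) hle (rnk_le ?_) (rnk_le ?_)
    (fun i hi ↦ rnk_le ?_) (fun i hi ↦ rnk_le ?_)
  · simp [larger]
  · simp [larger]
  · exact mem_union_right _ (mem_union_left _ (mem_image_of_mem _ hi))
  · exact mem_union_right _ (mem_union_right _ (mem_image_of_mem _ hi))

end Relaxation

section SparsePaving

variable {α : Type*} [DecidableEq α] {r : ℕ} {𝓗 : Set (Finset α)} {C I S : Finset α}

/-- The families of finsets that are the circuit-hyperplanes of a sparse paving matroid of rank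
`r`: sets of size `r`, no two of which differ by the exchange of a single element. -/
structure IsSparsePavingFamily (r : ℕ) (𝓗 : Set (Finset α)) : Prop where
  rank_pos : 0 < r
  card_eq : ∀ C ∈ 𝓗, #C = r
  two_le_card_sdiff : 𝓗.Pairwise fun C D ↦ 2 ≤ #(C \ D)

namespace IsSparsePavingFamily

lemma mono {𝓗' : Set (Finset α)} (h : IsSparsePavingFamily r 𝓗) (hsub : 𝓗' ⊆ 𝓗) :
    IsSparsePavingFamily r 𝓗' :=
  ⟨h.rank_pos, fun C hC ↦ h.card_eq C (hsub hC), h.two_le_card_sdiff.mono hsub⟩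

lemma notMem_of_card_lt (h : IsSparsePavingFamily r 𝓗) (hI : #I < r) : I ∉ 𝓗 :=
  fun hmem ↦ hI.ne (h.card_eq I hmem)

lemma eq_of_insert_mem (h : IsSparsePavingFamily r 𝓗) {e f : α} (he : e ∉ I)
    (heI : insert e I ∈ 𝓗) (hfI : insert f I ∈ 𝓗) : e = f := by
  by_contra hef
  have far : 2 ≤ #(insert e I \ insert f I) :=
    h.two_le_card_sdiff heI hfI (mt (insert_inj he).1 hef)
  rw [insert_sdiff_of_notMem _ (by simp [hef, he]), sdiff_eq_empty_iff_subset.2 (subset_insert f I)]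
    at far
  simp at far

lemma exists_superset_notMem (h : IsSparsePavingFamily r 𝓗) (hIS : I ⊆ S) (hI : #I < r)
    (hS : r < #S) : ∃ J, I ⊆ J ∧ J ⊆ S ∧ #J = r ∧ J ∉ 𝓗 := by
  obtain ⟨T, hIT, hTS, hT⟩ := exists_subsuperset_card_eq hIS (by lia : #I ≤ r - 1) (by lia)
  have two_le : 1 < #(S \ T) := by
    rw [card_sdiff_of_subset hTS]
    lia
  obtain ⟨e, he, f, hf, hef⟩ := one_lt_card.1 two_le
  obtain ⟨g, hg, hgT⟩ : ∃ g ∈ S \ T, insert g T ∉ 𝓗 := by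
    by_contra! hmem
    exact hef (h.eq_of_insert_mem (mem_sdiff.1 he).2 (hmem e he) (hmem f hf))
  obtain ⟨hgS, hg_notMem⟩ := mem_sdiff.1 hg
  exact ⟨insert g T, hIT.trans (subset_insert g T), insert_subset hgS hTS,
    by rw [card_insert_of_notMem hg_notMem]; lia, hgT⟩

lemma exists_insert_notMem (h : IsSparsePavingFamily r 𝓗) {J : Finset α}
    (hJ : J ∉ 𝓗) (hIJ : #I < #J) : ∃ e ∈ J, e ∉ I ∧ insert e I ∉ 𝓗 := by
  by_contra! hmem
  obtain ⟨e, heJ, heI⟩ := exists_mem_notMem_of_card_lt_card hIJ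
  have subset_insert_e : J ⊆ insert e I := fun f hf ↦ by
    by_cases hfI : f ∈ I
    · exact mem_insert_of_mem hfI
    · exact h.eq_of_insert_mem hfI (hmem f hf hfI) (hmem e heJ heI) ▸ mem_insert_self f I
  have eq_insert : J = insert e I :=
    eq_of_subset_of_card_le subset_insert_e (by rw [card_insert_of_notMem heI]; lia)
  exact hJ (eq_insert ▸ hmem e heJ heI)

end IsSparsePavingFamily

/-- The sparse paving matroid of rank `r` with circuit-hyperplanes `𝓗`: its independent sets are
the sets of size at most `r` outside `𝓗`. -/
def sparsePaving (h : IsSparsePavingFamily r 𝓗) : Matroid α :=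
  (IndepMatroid.ofFinset Set.univ (fun I ↦ #I ≤ r ∧ I ∉ 𝓗)
    ⟨by simp, h.notMem_of_card_lt (by simpa using h.rank_pos)⟩
    (fun I J hJ hIJ ↦ by
      rcases hIJ.eq_or_ssubset with rfl | hss
      · exact hJ
      · have hlt := (card_lt_card hss).trans_le hJ.1
        exact ⟨hlt.le, h.notMem_of_card_lt hlt⟩)
    (fun I J _ hJ hIJ ↦ by
      obtain ⟨e, heJ, heI, hmem⟩ := h.exists_insert_notMem hJ.2 hIJ
      exact ⟨e, heJ, heI, by have := hJ.1; rw [card_insert_of_notMem heI]; lia, hmem⟩)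
    fun I _ ↦ Set.subset_univ _).matroid

@[simp] lemma sparsePaving_ground (h : IsSparsePavingFamily r 𝓗) :
    (sparsePaving h).E = Set.univ := rfl

@[simp] lemma sparsePaving_indep_iff (h : IsSparsePavingFamily r 𝓗) :
    (sparsePaving h).Indep I ↔ #I ≤ r ∧ I ∉ 𝓗 := by
  simp only [sparsePaving, IndepMatroid.matroid_Indep, IndepMatroid.ofFinset_indep]

variable [Finite α]

instance (h : IsSparsePavingFamily r 𝓗) : (sparsePaving h).Finite :=
  ⟨Set.toFinite _⟩

lemma exists_rnk_sparsePaving_eq_card (h : IsSparsePavingFamily r 𝓗) (X : Set α) :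
    ∃ I : Finset α, ↑I ⊆ X ∧ #I ≤ r ∧ I ∉ 𝓗 ∧ (sparsePaving h).rnk X = #I := by
  obtain ⟨B, hB⟩ := (sparsePaving h).exists_isBasis' X
  lift B to Finset α using B.toFinite
  obtain ⟨hle, hmem⟩ := (sparsePaving_indep_iff h).1 hB.indep
  exact ⟨B, hB.subset, hle, hmem, by rw [rnk_eq_ncard_of_isBasis' hB, Set.ncard_coe_finset]⟩

lemma card_le_rnk_sparsePaving (h : IsSparsePavingFamily r 𝓗) {X : Set α} (hIX : ↑I ⊆ X)
    (hcard : #I ≤ r) (hI : I ∉ 𝓗) : #I ≤ (sparsePaving h).rnk X := by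
  have indep : (sparsePaving h).Indep I := (sparsePaving_indep_iff h).2 ⟨hcard, hI⟩
  have le_eRk := indep.encard_le_eRk_of_subset hIX
  rwa [← cast_rnk, Set.encard_coe_eq_coe_finsetCard, Nat.cast_le] at le_eRk

lemma rnk_sparsePaving_of_notMem (h : IsSparsePavingFamily r 𝓗) (hcard : #S ≤ r) (hS : S ∉ 𝓗) :
    (sparsePaving h).rnk S = #S := by
  obtain ⟨I, hIS, -, -, hI⟩ := exists_rnk_sparsePaving_eq_card h (S : Set α)
  exact le_antisymm (hI ▸ card_le_card (coe_subset.1 hIS))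
    (card_le_rnk_sparsePaving h subset_rfl hcard hS)

lemma rnk_sparsePaving_of_lt_card (h : IsSparsePavingFamily r 𝓗) (hS : r < #S) :
    (sparsePaving h).rnk S = r := by
  obtain ⟨I, -, hle, -, hI⟩ := exists_rnk_sparsePaving_eq_card h (S : Set α)
  obtain ⟨J, -, hJS, rfl, hJ⟩ :=
    h.exists_superset_notMem (empty_subset S) (by simpa using h.rank_pos) hS
  exact le_antisymm (hI ▸ hle) (card_le_rnk_sparsePaving h (coe_subset.2 hJS) le_rfl hJ)

lemma rnk_sparsePaving_of_mem (h : IsSparsePavingFamily r 𝓗) (hC : C ∈ 𝓗) :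
    (sparsePaving h).rnk C + 1 = r := by
  have hCr := h.card_eq C hC
  obtain ⟨I, hIC, -, hI_notMem, hI⟩ := exists_rnk_sparsePaving_eq_card h (C : Set α)
  have rnk_lt : #I < #C :=
    card_lt_card ((coe_subset.1 hIC).ssubset_of_ne fun heq ↦ hI_notMem (heq ▸ hC))
  obtain ⟨D, hDC, hD⟩ := exists_subset_card_eq (by lia : r - 1 ≤ #C)
  have hDr : #D < r := by have := h.rank_pos; lia
  have le_rnk := card_le_rnk_sparsePaving h (coe_subset.2 hDC) hDr.le (h.notMem_of_card_lt hDr)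
  lia

lemma rnk_sparsePaving_anti {𝓗' : Set (Finset α)} (h : IsSparsePavingFamily r 𝓗)
    (h' : IsSparsePavingFamily r 𝓗') (hsub : 𝓗' ⊆ 𝓗) (X : Set α) :
    (sparsePaving h).rnk X ≤ (sparsePaving h').rnk X := by
  obtain ⟨I, hIX, hle, hmem, hI⟩ := exists_rnk_sparsePaving_eq_card h X
  exact hI ▸ card_le_rnk_sparsePaving h' hIX hle fun hI' ↦ hmem (hsub hI')

lemma rnk_sparsePaving_sdiff_singleton_le (h : IsSparsePavingFamily r 𝓗)
    (h' : IsSparsePavingFamily r (𝓗 \ {C})) {X : Set α} (hX : X ≠ C) :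
    (sparsePaving h').rnk X ≤ (sparsePaving h).rnk X := by
  obtain ⟨I, hIX, hle, hmem, hI⟩ := exists_rnk_sparsePaving_eq_card h' X
  rw [hI]
  by_cases hI𝓗 : I ∈ 𝓗
  · obtain rfl : I = C := by_contra fun hIC ↦ hmem ⟨hI𝓗, hIC⟩
    lift X to Finset α using X.toFinite
    have card_lt : #I < #X :=
      card_lt_card ((coe_subset.1 hIX).ssubset_of_ne fun heq ↦ hX (congrArg _ heq.symm))
    rw [rnk_sparsePaving_of_lt_card h (h.card_eq I hI𝓗 ▸ card_lt)]
    exact hle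
  · exact card_le_rnk_sparsePaving h hIX hle hI𝓗

theorem memKinserClass_sparsePaving_of_relaxations (h : IsSparsePavingFamily r 𝓗) {n : ℕ}
    (hn : 3 ≤ n) (hcard : 2 * n - 3 < 𝓗.ncard)
    (hmem : ∀ C ∈ 𝓗, (sparsePaving (h.mono (Set.sdiff_subset (t := {C})))).MemKinserClass n) :
    (sparsePaving h).MemKinserClass n := by
  refine memKinserClass_of_relaxations hn (𝓗 := (↑) '' 𝓗) ?_ ?_
  · rwa [Set.ncard_image_of_injective _ coe_injective]
  rintro _ ⟨C, hC, rfl⟩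
  exact ⟨sparsePaving (h.mono Set.sdiff_subset), rfl, hmem C hC,
    rnk_sparsePaving_anti h _ Set.sdiff_subset, fun _ ↦ rnk_sparsePaving_sdiff_singleton_le h _⟩

end SparsePaving

lemma isRepOver_sparsePaving {α : Type u} [DecidableEq α] [Fintype α] {r : ℕ}
    {𝓗 : Set (Finset α)} (h : IsSparsePavingFamily r 𝓗) {K : Type v} [Field K]
    {W : Type (max u v)} [AddCommGroup W] [Module K W] (hW : Module.finrank K W = r)
    (hr : r < Fintype.card α) (φ : α → W)
    (hφ : ∀ S : Finset α, #S = r → (LinearIndepOn K φ S ↔ S ∉ 𝓗)) :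
    (sparsePaving h).IsRepOver K := by
  have : FiniteDimensional K W := Module.finite_of_finrank_pos (hW ▸ h.rank_pos)
  refine ⟨W, inferInstance, inferInstance, φ, fun I ↦ ?_⟩
  lift I to Finset α using I.toFinite
  simp only [sparsePaving_indep_iff, sparsePaving_ground, Set.subset_univ, true_and]
  change _ ↔ LinearIndepOn K φ I
  rcases lt_trichotomy #I r with hlt | heq | hgt
  · refine iff_of_true ⟨hlt.le, h.notMem_of_card_lt hlt⟩ ?_
    obtain ⟨J, hIJ, -, hJr, hJ⟩ := h.exists_superset_notMem (subset_univ I) hlt hr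
    exact ((hφ J hJr).2 hJ).mono (coe_subset.2 hIJ)
  · rw [hφ I heq, and_iff_right heq.le]
  · refine iff_of_false (fun hI ↦ hgt.not_ge hI.1) fun hI ↦ hgt.not_ge ?_
    simpa [hW] using hI.fintype_card_le_finrank

section KinserConfiguration

variable {m : ℕ}

lemma zmod_add_one_ne (hm : 3 ≤ m) (i : ZMod m) : i + 1 ≠ i := by
  have : Fact (1 < m) := ⟨by lia⟩
  simp

lemma zmod_add_one_add_one_ne (hm : 3 ≤ m) (i : ZMod m) : i + 1 + 1 ≠ i := by
  rw [add_assoc, ne_eq, add_eq_left, one_add_one_eq_two]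
  exact_mod_cast mt (ZMod.natCast_eq_zero_iff 2 m).1 (Nat.not_dvd_of_pos_of_lt two_pos hm)

lemma exists_mem_pair_notMem_pair (hm : 3 ≤ m) {i j : ZMod m} (hij : i ≠ j) :
    ∃ k ∈ ({i, i + 1} : Finset (ZMod m)), k ∉ ({j, j + 1} : Finset (ZMod m)) := by
  by_contra! hsub
  obtain rfl : i = j + 1 := by simpa [hij] using hsub i (by simp)
  simpa [zmod_add_one_add_one_ne hm, zmod_add_one_ne hm] using hsub (j + 1 + 1) (by simp)

/-- The ground set of the Kinser matroid of rank `m + 1`: points `x j` and `y i` indexed by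
the cyclic group `ZMod m`, encoded as `inl j` and `inr (inl i)`, and two further points
`inr (inr t)`, called hubs. -/
abbrev KinserGround (m : ℕ) := ZMod m ⊕ (ZMod m ⊕ Bool)

/-- The pair of hubs, which is the second set of the violating family. -/
def hubSet (m : ℕ) : Finset (KinserGround m) := disjSum ∅ (disjSum ∅ univ)

variable [NeZero m]

/-- The remaining sets of the violating family; they are arranged in a cycle. -/
def rimSet (i : ZMod m) : Finset (KinserGround m) := disjSum {i, i + 1}ᶜ (disjSum {i} ∅)

/-- The circuit-hyperplane spanned by two consecutive rim sets. -/
def rimHyperplane (i : ZMod m) : Finset (KinserGround m) := disjSum {i + 1}ᶜ (disjSum {i, i + 1} ∅)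

/-- The circuit-hyperplane spanned by a rim set and the hubs. -/
def hubHyperplane (i : ZMod m) : Finset (KinserGround m) :=
  disjSum {i, i + 1}ᶜ (disjSum {i} univ)

/-- The rim hyperplanes with index in `P` and the hub hyperplanes with index in `Q`. -/
def hyperplaneFamily (P Q : Set (ZMod m)) : Set (Finset (KinserGround m)) :=
  rimHyperplane '' P ∪ hubHyperplane '' Q

lemma hubSet_union_rimSet (i : ZMod m) : hubSet m ∪ rimSet i = hubHyperplane i := by
  ext (j | j | t) <;> simp [hubSet, rimSet, hubHyperplane]

lemma rimSet_union_rimSet (hm : 3 ≤ m) (i : ZMod m) :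
    rimSet i ∪ rimSet (i + 1) = rimHyperplane i := by
  have := zmod_add_one_add_one_ne hm i
  have := zmod_add_one_ne hm i
  ext (j | j | t)
  · simp only [rimSet, rimHyperplane, mem_union, inl_mem_disjSum, mem_compl, mem_insert,
      mem_singleton]
    grind
  · simp [rimSet, rimHyperplane]
  · simp [rimSet, rimHyperplane]

lemma card_compl_pair (hm : 3 ≤ m) (i : ZMod m) : #({i, i + 1}ᶜ : Finset (ZMod m)) = m - 2 := by
  rw [card_compl, ZMod.card, card_pair (zmod_add_one_ne hm i).symm]

lemma card_rimSet (hm : 3 ≤ m) (i : ZMod m) : #(rimSet i) = m - 1 := by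
  simp only [rimSet, card_disjSum, card_compl_pair hm, card_singleton, card_empty]
  lia

lemma card_rimHyperplane (hm : 3 ≤ m) (i : ZMod m) : #(rimHyperplane i) = m + 1 := by
  simp only [rimHyperplane, card_disjSum, card_compl, ZMod.card, card_singleton,
    card_pair (zmod_add_one_ne hm i).symm, card_empty]
  lia

lemma card_hubHyperplane (hm : 3 ≤ m) (i : ZMod m) : #(hubHyperplane i) = m + 1 := by
  simp only [hubHyperplane, card_disjSum, card_compl_pair hm, card_singleton, card_univ,
    Fintype.card_bool]
  lia

lemma rimHyperplane_ne_hubHyperplane (i j : ZMod m) : rimHyperplane i ≠ hubHyperplane j :=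
  fun h ↦ by simpa [rimHyperplane, hubHyperplane] using congrArg (Sum.inr (.inr true) ∈ ·) h

lemma rimHyperplane_injective : Function.Injective (rimHyperplane (m := m)) := fun i j h ↦ by
  simpa using (disjSum_inj.1 h).1

lemma hubHyperplane_injective : Function.Injective (hubHyperplane (m := m)) := fun i j h ↦ by
  simpa using (disjSum_inj.1 h).2

lemma two_le_card_of_inl_mem_of_inr_mem {β γ : Type*} {S : Finset (β ⊕ γ)} {x : β} {y : γ}
    (hx : .inl x ∈ S) (hy : .inr y ∈ S) : 2 ≤ #S :=
  one_lt_card.2 ⟨_, hx, _, hy, Sum.inl_ne_inr⟩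

lemma two_le_card_rimHyperplane_sdiff_rimHyperplane (hm : 3 ≤ m) {i j : ZMod m} (hij : i ≠ j) :
    2 ≤ #(rimHyperplane i \ rimHyperplane j) := by
  obtain ⟨k, hki, hkj⟩ := exists_mem_pair_notMem_pair hm hij
  apply two_le_card_of_inl_mem_of_inr_mem (x := j + 1) (y := .inl k)
  · simp [rimHyperplane, hij.symm]
  · simpa [rimHyperplane] using And.intro hki hkj

lemma two_le_card_hubHyperplane_sdiff_hubHyperplane (hm : 3 ≤ m) {i j : ZMod m} (hij : i ≠ j) :
    2 ≤ #(hubHyperplane i \ hubHyperplane j) := by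
  obtain ⟨k, hkj, hki⟩ := exists_mem_pair_notMem_pair hm hij.symm
  apply two_le_card_of_inl_mem_of_inr_mem (x := k) (y := .inl i)
  · simp only [hubHyperplane, mem_sdiff, inl_mem_disjSum, mem_compl]
    tauto
  · simp [hubHyperplane, hij]

lemma two_le_card_rimHyperplane_sdiff_hubHyperplane (hm : 3 ≤ m) (i j : ZMod m) :
    2 ≤ #(rimHyperplane i \ hubHyperplane j) := by
  have exists_ne (i j : ZMod m) : ∃ k ∈ ({i, i + 1} : Finset (ZMod m)), k ≠ j := by
    rcases eq_or_ne i j with rfl | hij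
    · exact ⟨i + 1, by simp, zmod_add_one_ne hm i⟩
    · exact ⟨i, by simp, hij⟩
  obtain ⟨x, hxj, hxi⟩ := exists_ne j (i + 1)
  obtain ⟨y, hyi, hyj⟩ := exists_ne i j
  apply two_le_card_of_inl_mem_of_inr_mem (x := x) (y := .inl y)
  · simp only [rimHyperplane, hubHyperplane, mem_sdiff, inl_mem_disjSum, mem_compl, mem_singleton]
    tauto
  · simp_all [rimHyperplane, hubHyperplane]

lemma two_le_card_hubHyperplane_sdiff_rimHyperplane (i j : ZMod m) :
    2 ≤ #(hubHyperplane i \ rimHyperplane j) :=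
  one_lt_card.2 ⟨.inr (.inr true), by simp [hubHyperplane, rimHyperplane], .inr (.inr false),
    by simp [hubHyperplane, rimHyperplane], by simp⟩

lemma isSparsePavingFamily_hyperplaneFamily (hm : 3 ≤ m) (P Q : Set (ZMod m)) :
    IsSparsePavingFamily (m + 1) (hyperplaneFamily P Q) where
  rank_pos := m.succ_pos
  card_eq := by
    rintro _ (⟨i, -, rfl⟩ | ⟨i, -, rfl⟩)
    exacts [card_rimHyperplane hm i, card_hubHyperplane hm i]
  two_le_card_sdiff := by
    rintro _ (⟨i, -, rfl⟩ | ⟨i, -, rfl⟩) _ (⟨j, -, rfl⟩ | ⟨j, -, rfl⟩) hne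
    · exact two_le_card_rimHyperplane_sdiff_rimHyperplane hm (ne_of_apply_ne _ hne)
    · exact two_le_card_rimHyperplane_sdiff_hubHyperplane hm i j
    · exact two_le_card_hubHyperplane_sdiff_rimHyperplane i j
    · exact two_le_card_hubHyperplane_sdiff_hubHyperplane hm (ne_of_apply_ne _ hne)

/-- The sparse paving matroid of rank `m + 1` whose circuit-hyperplanes are the rim hyperplanes
with index in `P` and the hub hyperplanes with index in `Q`. All indices together give the rank
`m + 1` Kinser matroid, smaller `P` and `Q` give its relaxations. -/
noncomputable abbrev kinserMatroid (hm : 3 ≤ m) (P Q : Set (ZMod m)) : Matroid (KinserGround m) :=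
  sparsePaving (isSparsePavingFamily_hyperplaneFamily hm P Q)

lemma ncard_hyperplaneFamily (P Q : Set (ZMod m)) :
    (hyperplaneFamily P Q).ncard = P.ncard + Q.ncard := by
  rw [hyperplaneFamily, Set.ncard_union_eq, Set.ncard_image_of_injective _ rimHyperplane_injective,
    Set.ncard_image_of_injective _ hubHyperplane_injective]
  rw [Set.disjoint_left]
  rintro _ ⟨i, -, rfl⟩ ⟨j, -, hj⟩
  exact rimHyperplane_ne_hubHyperplane i j hj.symm

lemma rimHyperplane_mem_hyperplaneFamily {P Q : Set (ZMod m)} {i : ZMod m} :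
    rimHyperplane i ∈ hyperplaneFamily P Q ↔ i ∈ P := by
  simp [hyperplaneFamily, rimHyperplane_injective.eq_iff, (rimHyperplane_ne_hubHyperplane _ _).symm]

lemma hubHyperplane_mem_hyperplaneFamily {P Q : Set (ZMod m)} {i : ZMod m} :
    hubHyperplane i ∈ hyperplaneFamily P Q ↔ i ∈ Q := by
  simp [hyperplaneFamily, hubHyperplane_injective.eq_iff, rimHyperplane_ne_hubHyperplane]

lemma hyperplaneFamily_sdiff_rimHyperplane (P Q : Set (ZMod m)) (k : ZMod m) :
    hyperplaneFamily P Q \ {rimHyperplane k} = hyperplaneFamily (P \ {k}) Q := by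
  have : rimHyperplane k ∉ hubHyperplane '' Q :=
    fun ⟨j, _, hj⟩ ↦ rimHyperplane_ne_hubHyperplane k j hj.symm
  rw [hyperplaneFamily, Set.union_sdiff_distrib, Set.sdiff_singleton_eq_self this,
    ← Set.image_singleton, ← Set.image_sdiff rimHyperplane_injective, hyperplaneFamily]

lemma hyperplaneFamily_sdiff_hubHyperplane (P Q : Set (ZMod m)) (k : ZMod m) :
    hyperplaneFamily P Q \ {hubHyperplane k} = hyperplaneFamily P (Q \ {k}) := by
  have : hubHyperplane k ∉ rimHyperplane '' P :=
    fun ⟨j, _, hj⟩ ↦ rimHyperplane_ne_hubHyperplane j k hj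
  rw [hyperplaneFamily, Set.union_sdiff_distrib, Set.sdiff_singleton_eq_self this,
    ← Set.image_singleton, ← Set.image_sdiff hubHyperplane_injective, hyperplaneFamily]

end KinserConfiguration

section Violation

variable {m : ℕ} [NeZero m]

/-- The family violating the `(m + 1)`-st Kinser inequality in the Kinser matroid of rank `m + 1`:
`X₂` is the pair of hubs and `X₁, X₃, …, X_{m+1}` are the rim sets `0, 1, …, m - 1`; the
truncated subtraction gives `X₁` the index `0`. -/
def kinserFamily (m : ℕ) [NeZero m] (i : ℕ) : Finset (KinserGround m) :=
  if i = 2 then hubSet m else rimSet ((i - 2 : ℕ) : ZMod m)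

lemma kinserFamily_two_union {i : ℕ} (hi : i ≠ 2) :
    kinserFamily m 2 ∪ kinserFamily m i = hubHyperplane ((i - 2 : ℕ) : ZMod m) := by
  simp only [kinserFamily, ↓reduceIte, hi, hubSet_union_rimSet]

lemma kinserFamily_pred_union (hm : 3 ≤ m) {i : ℕ} (hi : 4 ≤ i) :
    kinserFamily m (i - 1) ∪ kinserFamily m i = rimHyperplane ((i - 3 : ℕ) : ZMod m) := by
  have index : i - 2 = i - 3 + 1 := by lia
  rw [kinserFamily, kinserFamily, if_neg (by lia), if_neg (by lia), index, Nat.sub_sub,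
    Nat.cast_add_one, rimSet_union_rimSet hm]

lemma kinserFamily_one_union_three (hm : 3 ≤ m) :
    kinserFamily m 1 ∪ kinserFamily m 3 = rimHyperplane 0 := by
  simp [kinserFamily, ← rimSet_union_rimSet hm]

lemma kinserFamily_last (hm : 3 ≤ m) : kinserFamily m (m + 1) = rimSet (-1) := by
  rw [kinserFamily, if_neg (by lia), Nat.add_sub_add_right m 1 1, Nat.cast_sub (by lia)]
  simp

lemma kinserFamily_one_union_last (hm : 3 ≤ m) :
    kinserFamily m 1 ∪ kinserFamily m (m + 1) = rimHyperplane (-1) := by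
  rw [kinserFamily_last hm, union_comm, ← rimSet_union_rimSet hm]
  simp [kinserFamily]

lemma rimHyperplane_ssubset_union_rimSet {i j : ZMod m} (hji : j ∉ ({i, i + 1} : Finset (ZMod m))) :
    rimHyperplane i ⊂ rimHyperplane i ∪ rimSet j :=
  ssubset_of_subset_not_subset subset_union_left fun h ↦ hji <| by
    simpa [rimHyperplane, rimSet] using h (mem_union_right _ (by simp [rimSet] : .inr (.inl j) ∈ _))

lemma rimHyperplane_ssubset_hubSet_union (i : ZMod m) :
    rimHyperplane i ⊂ hubSet m ∪ rimHyperplane i :=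
  ssubset_of_subset_not_subset subset_union_right fun h ↦ by
    simpa [rimHyperplane] using
      h (mem_union_left _ (by simp [hubSet] : .inr (.inr true) ∈ _))

variable {P Q : Set (ZMod m)}

lemma rnk_eq_of_rimHyperplane_ssubset (hm : 3 ≤ m) {i : ZMod m} {S : Finset (KinserGround m)}
    (hS : rimHyperplane i ⊂ S) :
    (kinserMatroid hm P Q).rnk S = m + 1 :=
  rnk_sparsePaving_of_lt_card _ (card_rimHyperplane hm i ▸ card_lt_card hS)

lemma rnk_rimSet (hm : 3 ≤ m) (i : ZMod m) :
    (kinserMatroid hm P Q).rnk (rimSet i) = m - 1 := by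
  have h := isSparsePavingFamily_hyperplaneFamily hm P Q
  have card_lt : #(rimSet i) < m + 1 := by
    rw [card_rimSet hm]
    lia
  rw [rnk_sparsePaving_of_notMem _ card_lt.le (h.notMem_of_card_lt card_lt), card_rimSet hm]

lemma rnk_rimHyperplane (hm : 3 ≤ m) {i : ZMod m} (hi : i ∈ P) :
    (kinserMatroid hm P Q).rnk (rimHyperplane i) = m :=
  Nat.succ.inj (rnk_sparsePaving_of_mem _ (rimHyperplane_mem_hyperplaneFamily.2 hi))

lemma rnk_hubHyperplane (hm : 3 ≤ m) {i : ZMod m} (hi : i ∈ Q) :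
    (kinserMatroid hm P Q).rnk (hubHyperplane i) = m :=
  Nat.succ.inj (rnk_sparsePaving_of_mem _ (hubHyperplane_mem_hyperplaneFamily.2 hi))

lemma rnk_hubHyperplane_of_notMem (hm : 3 ≤ m) {i : ZMod m} (hi : i ∉ Q) :
    (kinserMatroid hm P Q).rnk (hubHyperplane i) = m + 1 := by
  rw [rnk_sparsePaving_of_notMem _ (card_hubHyperplane hm i).le
    (mt hubHyperplane_mem_hyperplaneFamily.1 hi), card_hubHyperplane hm]

lemma rnk_kinserFamily (hm : 3 ≤ m) {i : ℕ} (hi : i ≠ 2) :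
    (kinserMatroid hm P Q).rnk (kinserFamily m i) = m - 1 := by
  rw [kinserFamily, if_neg hi, rnk_rimSet]

lemma rnk_kinserFamily_two_union (hm : 3 ≤ m) {i : ℕ} (hi : 2 < i)
    (hQ : ((i - 2 : ℕ) : ZMod m) ∈ Q) :
    (kinserMatroid hm P Q).rnk (kinserFamily m 2 ∪ kinserFamily m i : Finset _) = m := by
  rw [kinserFamily_two_union hi.ne', rnk_hubHyperplane hm hQ]

lemma rnk_kinserFamily_pred_union (hm : 3 ≤ m) {i : ℕ} (hi : 4 ≤ i)
    (hP : ((i - 3 : ℕ) : ZMod m) ∈ P) :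
    (kinserMatroid hm P Q).rnk (kinserFamily m (i - 1) ∪ kinserFamily m i : Finset _) = m := by
  rw [kinserFamily_pred_union hm hi, rnk_rimHyperplane hm hP]

lemma rnk_kinserFamily_two_union_pred_union (hm : 3 ≤ m) {i : ℕ} (hi : 4 ≤ i) :
    (kinserMatroid hm P Q).rnk
      (kinserFamily m 2 ∪ kinserFamily m (i - 1) ∪ kinserFamily m i : Finset _) = m + 1 := by
  rw [union_assoc, kinserFamily_pred_union hm hi]
  exact rnk_eq_of_rimHyperplane_ssubset hm (rimHyperplane_ssubset_hubSet_union _)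

lemma rnk_kinserFamily_one_union_three_union_last (hm : 3 ≤ m) :
    (kinserMatroid hm P Q).rnk
      (kinserFamily m 1 ∪ kinserFamily m 3 ∪ kinserFamily m (m + 1) : Finset _) = m + 1 := by
  rw [kinserFamily_one_union_three hm, kinserFamily_last hm]
  refine rnk_eq_of_rimHyperplane_ssubset hm (rimHyperplane_ssubset_union_rimSet ?_)
  have neg_one_ne_zero : (-1 : ZMod m) ≠ 0 := by simpa using zmod_add_one_ne hm (-1)
  have neg_one_ne_one : (-1 : ZMod m) ≠ 1 := by simpa using (zmod_add_one_add_one_ne hm (-1)).symm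
  simp [neg_one_ne_zero, neg_one_ne_one]

lemma not_memKinserClass_kinserMatroid (hm : 3 ≤ m) :
    ¬ (kinserMatroid hm Set.univ {0}ᶜ : Matroid (KinserGround m)).MemKinserClass (m + 1) := by
  intro hM
  have ineq := hM (fun i ↦ kinserFamily m i) fun i _ ↦ Set.subset_univ _
  have index_ne_zero : ∀ i ∈ Icc 3 (m + 1), ((i - 2 : ℕ) : ZMod m) ≠ 0 := fun i hi ↦ by
    obtain ⟨three_le, le_last⟩ := mem_Icc.1 hi
    exact mt (ZMod.natCast_eq_zero_iff _ m).1 (Nat.not_dvd_of_pos_of_lt (by lia) (by lia))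
  simp only [KinserIneq, ← coe_union] at ineq
  rw [sum_congr rfl fun i hi ↦ rnk_kinserFamily hm (by grind : i ≠ 2),
    sum_congr rfl fun i hi ↦
      rnk_kinserFamily_two_union hm (mem_Icc.1 hi).1 (index_ne_zero i hi),
    sum_congr rfl fun i hi ↦ rnk_kinserFamily_two_union_pred_union hm (mem_Icc.1 hi).1,
    rnk_kinserFamily_one_union_three_union_last, union_comm (kinserFamily m 1) (kinserFamily m 2),
    kinserFamily_two_union (by simp), rnk_hubHyperplane_of_notMem hm (by simp),
    kinserFamily_one_union_three hm, kinserFamily_one_union_last hm,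
    rnk_rimHyperplane hm (Set.mem_univ _), rnk_rimHyperplane hm (Set.mem_univ _),
    sum_congr rfl fun i hi ↦
      rnk_kinserFamily_pred_union hm (mem_Icc.1 hi).1 (Set.mem_univ _)] at ineq
  obtain ⟨k, rfl⟩ := Nat.exists_eq_add_of_le hm
  simp only [sum_const, Nat.card_Icc, smul_eq_mul] at ineq
  grind

end Violation

section LinearAlgebra

variable {α ι A K : Type*} [Fintype ι] [CommRing A] [Field K] {S : Finset α}

lemma linearIndepOn_iff_det_ne_zero [DecidableEq ι] (e : ι ≃ S) {v : α → ι → K} :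
    LinearIndepOn K v S ↔ (Matrix.of fun i ↦ v (e i)).det ≠ 0 := by
  rw [← isUnit_iff_ne_zero, ← Matrix.isUnit_iff_isUnit_det,
    ← Matrix.linearIndependent_rows_iff_isUnit]
  exact (linearIndependent_equiv e).symm

lemma linearIndepOn_iff_forall_dotProduct (hS : #S = Fintype.card ι) {v : α → ι → K} :
    LinearIndepOn K v S ↔ ∀ f : ι → K, (∀ s ∈ S, v s ⬝ᵥ f = 0) → f = 0 := by
  classical
  have e : ι ≃ S := Fintype.equivOfCardEq (by simp [hS])
  have dotProduct_eq_zero (f : ι → K) :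
      (Matrix.of fun i ↦ v (e i)).mulVec f = 0 ↔ ∀ s ∈ S, v s ⬝ᵥ f = 0 := by
    rw [funext_iff, e.forall_congr_left, Subtype.forall]
    simp [Matrix.mulVec]
  rw [linearIndepOn_iff_det_ne_zero e, ne_eq, ← Matrix.exists_mulVec_eq_zero_iff]
  simp only [not_exists, not_and', not_not, dotProduct_eq_zero]

lemma linearIndepOn_comp_of_linearIndepOn_comp {k : Type*} [Field k] (φ : A →+* k) {ψ : A →+* K}
    (hψ : Function.Injective ψ) (hS : #S = Fintype.card ι) {v : α → ι → A}
    (h : LinearIndepOn k (fun s ↦ φ ∘ v s) S) : LinearIndepOn K (fun s ↦ ψ ∘ v s) S := by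
  classical
  have e : ι ≃ S := Fintype.equivOfCardEq (by simp [hS])
  rw [linearIndepOn_iff_det_ne_zero e] at h ⊢
  have map_det_ne_zero : φ (Matrix.of fun i ↦ v (e i)).det ≠ 0 := (φ.map_det _).trans_ne h
  exact (ψ.map_det _).symm.trans_ne ((map_ne_zero_iff ψ hψ).2 (ne_zero_of_map map_det_ne_zero))

end LinearAlgebra

section KinserVectors
variable {m : ℕ}

/-- A configuration of `2 * m + 2` vectors in a space of dimension `m + 1` that represents
`kinserMatroid hm {i | b i = a (i + 1)} {i | a i = b i}` when `c` is generic. The coordinate `none`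
is the direction of the line of the hubs modulo the all-ones vector, and the vector of `y i` has
the slopes `a i` and `b i`, that is the ratios to the coordinate `none` of the coordinates `i` and
`i + 1`; its other coordinates are those of `c i`. -/
def kinserVector {R : Type*} [CommRing R] (a b : ZMod m → R) (c : ZMod m → Option (ZMod m) → R) :
    KinserGround m → Option (ZMod m) → R
  | .inl j => Pi.single (some j) 1
  | .inr (.inl i) =>
    Function.update (Function.update (c i) (some i) (c i none * a i)) (some (i + 1))
      (c i none * b i)
  | .inr (.inr t) => Function.update 1 none (if t then 2 else 1)

lemma comp_kinserVector {R R' : Type*} [CommRing R] [CommRing R'] (φ : R →+* R')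
    (a b : ZMod m → R) (c : ZMod m → Option (ZMod m) → R) (s : KinserGround m) :
    φ ∘ kinserVector a b c s = kinserVector (φ ∘ a) (φ ∘ b) (fun i ↦ φ ∘ c i) s := by
  rcases s with j | i | t
  · simp only [kinserVector, Pi.single, Function.comp_update, map_one]
    simp [Function.comp_def, Pi.zero_def]
  · simp only [kinserVector, Function.comp_update, map_mul, Function.comp_apply]
  · simp only [kinserVector, Function.comp_update, apply_ite φ, map_ofNat, map_one]
    simp [Function.comp_def, Pi.one_def]

variable [NeZero m]

lemma kinserVector_inl_dotProduct {R : Type*} [CommRing R] (a b : ZMod m → R)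
    (c : ZMod m → Option (ZMod m) → R) (j : ZMod m) (f : Option (ZMod m) → R) :
    kinserVector a b c (.inl j) ⬝ᵥ f = f (some j) := by
  simp [kinserVector]

lemma kinserVector_hub_dotProduct {R : Type*} [CommRing R] (a b : ZMod m → R)
    (c : ZMod m → Option (ZMod m) → R) (t : Bool) (f : Option (ZMod m) → R) :
    kinserVector a b c (.inr (.inr t)) ⬝ᵥ f = (if t then 2 else 1) * f none + ∑ j, f (some j) := by
  simp [kinserVector, dotProduct, Fintype.sum_option]

lemma kinserVector_inr_inl_dotProduct {R : Type*} [CommRing R] (hm : 3 ≤ m) (a b : ZMod m → R)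
    (c : ZMod m → Option (ZMod m) → R) {i : ZMod m} {f : Option (ZMod m) → R}
    (hf : ∀ j, j ≠ i → j ≠ i + 1 → f (some j) = 0) :
    kinserVector a b c (.inr (.inl i)) ⬝ᵥ f =
      c i none * (f none + a i * f (some i) + b i * f (some (i + 1))) := by
  have sum_eq := Fintype.sum_eq_add i (i + 1) (f := fun j ↦
    kinserVector a b c (.inr (.inl i)) (some j) * f (some j)) (zmod_add_one_ne hm i).symm
    fun j hj ↦ by rw [hf j hj.1 hj.2, mul_zero]
  rw [dotProduct, Fintype.sum_option, sum_eq]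
  simp only [kinserVector, ne_eq, reduceCtorEq, not_false_eq_true, Function.update_of_ne,
    Option.some_inj, (zmod_add_one_ne hm i).symm, Function.update_self]
  ring

variable {K : Type*} [Field K] {a b : ZMod m → K} {c : ZMod m → Option (ZMod m) → K}

lemma not_linearIndepOn_rimHyperplane (hm : 3 ≤ m) {k : ZMod m} (hba : b k = a (k + 1)) :
    ¬ LinearIndepOn K (kinserVector a b c) (rimHyperplane k) := by
  rw [linearIndepOn_iff_forall_dotProduct (by simp [card_rimHyperplane hm])]
  intro indep
  have ne_succ := zmod_add_one_ne hm k
  have ne_succ_succ := zmod_add_one_ne hm (k + 1)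
  have orthogonal : ∀ s ∈ rimHyperplane k,
      kinserVector a b c s ⬝ᵥ (Pi.single (some (k + 1)) 1 - Pi.single none (b k)) = 0 := by
    rintro (j | i | t) hs
    · rw [kinserVector_inl_dotProduct]
      simpa [rimHyperplane, Pi.single_apply] using hs
    · obtain rfl | rfl : i = k ∨ i = k + 1 := by simpa [rimHyperplane] using hs
      · rw [kinserVector_inr_inl_dotProduct hm a b c (by simp +contextual)]
        simp [ne_succ.symm]
      · rw [kinserVector_inr_inl_dotProduct hm a b c (by simp +contextual)]
        simp [ne_succ_succ, hba]
    · simp [rimHyperplane] at hs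
  simpa using congrFun (indep _ orthogonal) (some (k + 1))

lemma linearIndepOn_rimHyperplane (hm : 3 ≤ m) (hc : ∀ i, c i none ≠ 0) {k : ZMod m}
    (hba : b k ≠ a (k + 1)) : LinearIndepOn K (kinserVector a b c) (rimHyperplane k) := by
  rw [linearIndepOn_iff_forall_dotProduct (by simp [card_rimHyperplane hm])]
  intro f hf
  have zero_of_ne (j) (hj : j ≠ k + 1) : f (some j) = 0 := by
    simpa [kinserVector_inl_dotProduct] using hf (.inl j) (by simpa [rimHyperplane] using hj)
  have left := hf (.inr (.inl k)) (by simp [rimHyperplane])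
  have right := hf (.inr (.inl (k + 1))) (by simp [rimHyperplane])
  rw [kinserVector_inr_inl_dotProduct hm a b c fun j _ ↦ zero_of_ne j,
    zero_of_ne k (zmod_add_one_ne hm k).symm, mul_eq_zero_iff_left (hc _)] at left
  rw [kinserVector_inr_inl_dotProduct hm a b c fun j hj _ ↦ zero_of_ne j hj,
    zero_of_ne (k + 1 + 1) (zmod_add_one_ne hm (k + 1)), mul_eq_zero_iff_left (hc _)] at right
  have succ_zero : f (some (k + 1)) = 0 := by
    have : (b k - a (k + 1)) * f (some (k + 1)) = 0 := by linear_combination left - right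
    exact (mul_eq_zero_iff_left (sub_ne_zero.2 hba)).1 this
  refine funext <| Option.rec (by simpa [succ_zero] using left) fun j ↦ ?_
  rcases eq_or_ne j (k + 1) with rfl | hj
  exacts [succ_zero, zero_of_ne j hj]

lemma linearIndepOn_rimHyperplane_iff (hm : 3 ≤ m) (hc : ∀ i, c i none ≠ 0) {k : ZMod m} :
    LinearIndepOn K (kinserVector a b c) (rimHyperplane k) ↔ b k ≠ a (k + 1) :=
  ⟨fun h hba ↦ not_linearIndepOn_rimHyperplane hm hba h, linearIndepOn_rimHyperplane hm hc⟩

lemma not_linearIndepOn_hubHyperplane (hm : 3 ≤ m) {k : ZMod m} (hab : a k = b k) :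
    ¬ LinearIndepOn K (kinserVector a b c) (hubHyperplane k) := by
  rw [linearIndepOn_iff_forall_dotProduct (by simp [card_hubHyperplane hm])]
  intro indep
  have ne_succ := zmod_add_one_ne hm k
  have orthogonal : ∀ s ∈ hubHyperplane k,
      kinserVector a b c s ⬝ᵥ (Pi.single (some k) 1 - Pi.single (some (k + 1)) 1) = 0 := by
    rintro (j | i | t) hs
    · have : j ≠ k ∧ j ≠ k + 1 := by simpa [hubHyperplane] using hs
      simp [kinserVector, this.1.symm, this.2.symm]
    · obtain rfl : i = k := by simpa [hubHyperplane] using hs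
      rw [kinserVector_inr_inl_dotProduct hm a b c (by simp +contextual)]
      simp [ne_succ, ne_succ.symm, hab]
    · simp [kinserVector]
  simpa [ne_succ.symm] using congrFun (indep _ orthogonal) (some k)

lemma eq_zero_of_kinserVector_hub_dotProduct_eq_zero {f : Option (ZMod m) → K}
    (hf : ∀ t, kinserVector a b c (.inr (.inr t)) ⬝ᵥ f = 0) : f none = 0 := by
  have htrue := hf true
  have hfalse := hf false
  simp only [kinserVector_hub_dotProduct, ↓reduceIte, Bool.false_eq_true, one_mul] at htrue hfalse
  linear_combination htrue - hfalse

lemma linearIndepOn_hubHyperplane (hm : 3 ≤ m) (hc : ∀ i, c i none ≠ 0) {k : ZMod m}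
    (hab : a k ≠ b k) : LinearIndepOn K (kinserVector a b c) (hubHyperplane k) := by
  rw [linearIndepOn_iff_forall_dotProduct (by simp [card_hubHyperplane hm])]
  intro f hf
  have ne_succ := zmod_add_one_ne hm k
  have zero_of_ne (j) (hj : j ≠ k) (hj' : j ≠ k + 1) : f (some j) = 0 := by
    simpa [kinserVector_inl_dotProduct] using
      hf (.inl j) (by simpa [hubHyperplane] using And.intro hj hj')
  have hub (t : Bool) := hf (.inr (.inr t)) (by simp [hubHyperplane])
  have none_zero := eq_zero_of_kinserVector_hub_dotProduct_eq_zero hub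
  have add_zero : f (some k) + f (some (k + 1)) = 0 := by
    simpa [kinserVector_hub_dotProduct, none_zero,
      Fintype.sum_eq_add k (k + 1) ne_succ.symm fun j hj ↦ zero_of_ne j hj.1 hj.2] using hub true
  have slopes := hf (.inr (.inl k)) (by simp [hubHyperplane])
  rw [kinserVector_inr_inl_dotProduct hm a b c zero_of_ne, none_zero,
    mul_eq_zero_iff_left (hc _)] at slopes
  have self_zero : f (some k) = 0 := by
    have : (a k - b k) * f (some k) = 0 := by linear_combination slopes - b k * add_zero
    exact (mul_eq_zero_iff_left (sub_ne_zero.2 hab)).1 this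
  have succ_zero : f (some (k + 1)) = 0 := by simpa [self_zero] using add_zero
  refine funext <| Option.rec none_zero fun j ↦ ?_
  rcases eq_or_ne j k with rfl | hj
  · exact self_zero
  rcases eq_or_ne j (k + 1) with rfl | hj'
  exacts [succ_zero, zero_of_ne j hj hj']

lemma linearIndepOn_hubHyperplane_iff (hm : 3 ≤ m) (hc : ∀ i, c i none ≠ 0) {k : ZMod m} :
    LinearIndepOn K (kinserVector a b c) (hubHyperplane k) ↔ a k ≠ b k :=
  ⟨fun h hab ↦ not_linearIndepOn_hubHyperplane hm hab h, linearIndepOn_hubHyperplane hm hc⟩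

end KinserVectors

section Matching

lemma exists_injOn_mem_sdiff {ι β : Type*} [Nonempty β] [DecidableEq β]
    {Y : Finset ι} {W : Finset β} {F : ι → Finset β}
    (hYW : #Y ≤ #W) (hone : ∀ i ∈ Y, (W \ F i).Nonempty)
    (htwo : (Y : Set ι).Pairwise fun i j ↦ 2 ≤ #(W \ (F i ∩ F j)))
    (hthree : ∀ i j k, i ≠ j → i ≠ k → j ≠ k → F i ∩ F j ∩ F k = ∅) :
    ∃ s : ι → β, Set.InjOn s Y ∧ ∀ i ∈ Y, s i ∈ W \ F i := by
  classical
  have hall (T : Finset Y) : #T ≤ #(T.biUnion fun i ↦ W \ F i) := by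
    rcases Nat.lt_trichotomy #T 2 with hT | hT | hT
    · have : T.card = 0 ∨ T.card = 1 := by lia
      rcases this with hT | hT
      · simp [hT]
      · obtain ⟨i, rfl⟩ := card_eq_one.1 hT
        simpa using hone i i.2
    · obtain ⟨i, j, hij, rfl⟩ := card_eq_two.1 hT
      rw [hT, biUnion_insert, singleton_biUnion, ← sdiff_inter_distrib_right]
      exact htwo i.2 j.2 (Subtype.coe_injective.ne hij)
    · obtain ⟨i, j, k, hi, hj, hk, hij, hik, hjk⟩ := two_lt_card_iff.1 hT
      have hW : W ⊆ T.biUnion fun i ↦ W \ F i := fun z hz ↦ by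
        have hz3 : z ∉ F i ∩ F j ∩ F k := by
          rw [hthree i j k (Subtype.coe_injective.ne hij) (Subtype.coe_injective.ne hik)
            (Subtype.coe_injective.ne hjk)]
          exact notMem_empty z
        rw [mem_biUnion]
        simp only [mem_inter, not_and_or] at hz3
        rcases hz3 with (h | h) | h
        exacts [⟨i, hi, mem_sdiff.2 ⟨hz, h⟩⟩, ⟨j, hj, mem_sdiff.2 ⟨hz, h⟩⟩,
          ⟨k, hk, mem_sdiff.2 ⟨hz, h⟩⟩]
      calc #T ≤ #Y := by simpa using card_le_univ T
        _ ≤ #W := hYW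
        _ ≤ _ := card_le_card hW
  obtain ⟨f, f_inj, f_mem⟩ := (all_card_le_biUnion_card_iff_exists_injective _).1 hall
  obtain ⟨s, rfl⟩ := Subtype.surjective_restrict (β := fun _ ↦ β) (· ∈ Y) f
  exact ⟨s, Set.injOn_iff_injective.2 f_inj, fun i hi ↦ f_mem ⟨i, hi⟩⟩

variable {m : ℕ}

/-- The coordinates of the vector of `y i` that are prescribed by the slopes. -/
def slopeCoords (i : ZMod m) : Finset (Option (ZMod m)) := {some i, some (i + 1)}

lemma slopeCoords_inter_eq_empty {i j k : ZMod m} (hij : i ≠ j) (hik : i ≠ k) (hjk : j ≠ k) :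
    slopeCoords i ∩ slopeCoords j ∩ slopeCoords k = ∅ := by
  ext z
  simp only [slopeCoords, mem_inter, mem_insert, mem_singleton, notMem_empty, iff_false]
  grind

lemma card_slopeCoords_inter_le_one (hm : 3 ≤ m) {i j : ZMod m} (hij : i ≠ j) :
    #(slopeCoords i ∩ slopeCoords j) ≤ 1 := by
  rw [card_le_one]
  have := zmod_add_one_add_one_ne hm
  simp only [slopeCoords, mem_inter, mem_insert, mem_singleton]
  grind

variable [NeZero m]

/-- The coordinates that remain to be spanned by the vectors of the points `y i ∈ S`: those not
carried by some `x j ∈ S`, nor by the difference of the two hubs in case both are in `S`. -/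
def freeCoords (S : Finset (KinserGround m)) : Finset (Option (ZMod m)) :=
  if S.toRight.toRight = univ then S.toLeftᶜ.map .some else insertNone S.toLeftᶜ

variable {S : Finset (KinserGround m)}

lemma none_mem_freeCoords : none ∈ freeCoords S ↔ S.toRight.toRight ≠ univ := by
  unfold freeCoords
  split_ifs with h <;> simp [h, -Fintype.univ_bool]

lemma some_mem_freeCoords {j : ZMod m} : some j ∈ freeCoords S ↔ .inl j ∉ S := by
  unfold freeCoords
  split_ifs <;> simp

lemma card_freeCoords (hS : #S = m + 1) :
    #(freeCoords S) = #S.toRight.toLeft + if S.toRight.toRight = ∅ then 0 else 1 := by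
  have card_S : #S.toLeft + (#S.toRight.toLeft + #S.toRight.toRight) = m + 1 := by
    rw [card_toLeft_add_card_toRight, card_toLeft_add_card_toRight, hS]
  have card_compl_toLeft : #S.toLeftᶜ = m - #S.toLeft := by rw [card_compl, ZMod.card]
  have toLeft_le : #S.toLeft ≤ m := by simpa using card_le_univ S.toLeft
  have hub_le : #S.toRight.toRight ≤ 2 := card_le_univ _
  have hub_univ : S.toRight.toRight = univ ↔ #S.toRight.toRight = 2 :=
    (card_eq_iff_eq_univ _).symm
  have hub_empty : S.toRight.toRight = ∅ ↔ #S.toRight.toRight = 0 := card_eq_zero.symm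
  simp only [freeCoords, hub_univ, hub_empty]
  split_ifs <;> simp only [card_map, card_insertNone] <;> lia

lemma eq_hubHyperplane {k : ZMod m} (hx : S.toLeft = {k, k + 1}ᶜ) (hy : S.toRight.toLeft = {k})
    (hhub : S.toRight.toRight = univ) : S = hubHyperplane k := by
  rw [hubHyperplane, ← hx, ← hy, ← hhub, toLeft_disjSum_toRight, toLeft_disjSum_toRight]

lemma eq_rimHyperplane {k : ZMod m} (hx : S.toLeft = {k + 1}ᶜ)
    (hy : S.toRight.toLeft = {k, k + 1}) (hhub : S.toRight.toRight = ∅) :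
    S = rimHyperplane k := by
  rw [rimHyperplane, ← hx, ← hy, ← hhub, toLeft_disjSum_toRight, toLeft_disjSum_toRight]

lemma freeCoords_sdiff_slopeCoords_nonempty (hm : 3 ≤ m) (hS : #S = m + 1)
    (hhub : ∀ k, S ≠ hubHyperplane k) {i : ZMod m} (hi : i ∈ S.toRight.toLeft) :
    (freeCoords S \ slopeCoords i).Nonempty := by
  by_contra! h_empty
  have free_subset : freeCoords S ⊆ slopeCoords i := sdiff_eq_empty_iff_subset.1 h_empty
  have hubs : S.toRight.toRight = univ := by
    by_contra hne
    simpa [slopeCoords] using free_subset (none_mem_freeCoords.2 hne)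
  have card_free := card_freeCoords hS
  rw [hubs, if_neg univ_nonempty.ne_empty] at card_free
  have card_slope : #(slopeCoords i) = 2 := card_pair (by simpa using (zmod_add_one_ne hm i).symm)
  have y_pos := card_pos.2 ⟨i, hi⟩
  have free_eq : freeCoords S = slopeCoords i :=
    eq_of_subset_of_card_le free_subset (by lia)
  refine hhub i (eq_hubHyperplane ?_ ?_ hubs)
  · rw [← compl_compl S.toLeft]
    congr 1
    ext j
    simpa [some_mem_freeCoords, slopeCoords] using congrArg (some j ∈ ·) free_eq
  · rw [free_eq, card_slope] at card_free
    exact eq_singleton_iff_unique_mem.2 ⟨hi, fun j hj ↦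
      card_le_one.1 (by lia) j hj i hi⟩

lemma two_le_card_freeCoords_sdiff (hm : 3 ≤ m) (hS : #S = m + 1)
    (hrim : ∀ k, S ≠ rimHyperplane k) :
    (S.toRight.toLeft : Set (ZMod m)).Pairwise fun i j ↦
      2 ≤ #(freeCoords S \ (slopeCoords i ∩ slopeCoords j)) := by
  intro i hi j hj hij
  by_contra! hlt
  have pair_subset : {i, j} ⊆ S.toRight.toLeft := insert_subset hi (singleton_subset_iff.2 hj)
  have two_le := card_le_card pair_subset
  rw [card_pair hij] at two_le
  have inter_le := card_slopeCoords_inter_le_one hm hij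
  have card_free := card_freeCoords hS
  have card_add := card_sdiff_add_card_inter (freeCoords S) (slopeCoords i ∩ slopeCoords j)
  have card_inter := card_le_card (inter_subset_right :
    freeCoords S ∩ (slopeCoords i ∩ slopeCoords j) ⊆ _)
  have hubs : S.toRight.toRight = ∅ := by
    by_contra hne
    rw [if_neg hne] at card_free
    lia
  rw [if_pos hubs, add_zero] at card_free
  have y_eq : S.toRight.toLeft = {i, j} :=
    (eq_of_subset_of_card_le pair_subset (by rw [card_pair hij]; lia)).symm
  obtain ⟨z, hz⟩ := card_pos.1 (by lia : 0 < #(freeCoords S ∩ (slopeCoords i ∩ slopeCoords j)))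
  have free_eq : freeCoords S = insertNone S.toLeftᶜ :=
    if_neg (hubs ▸ univ_nonempty.ne_empty.symm)
  have card_compl : #S.toLeftᶜ = 1 := by
    rw [free_eq, card_insertNone, y_eq, card_pair hij] at card_free
    lia
  obtain ⟨l, hl⟩ := card_eq_one.1 card_compl
  have x_eq : S.toLeft = {l}ᶜ := by rw [← hl, compl_compl]
  have l_mem : (l = i ∨ l = i + 1) ∧ (l = j ∨ l = j + 1) := by
    rw [free_eq, hl] at hz
    rcases z with _ | z
    · simp [slopeCoords] at hz
    · simp only [slopeCoords, mem_inter, some_mem_insertNone, mem_insert, mem_singleton,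
        Option.some_inj] at hz
      obtain ⟨rfl, z_mem⟩ := hz
      exact z_mem
  obtain ⟨rfl, rfl⟩ | ⟨rfl, rfl⟩ : l = i + 1 ∧ j = i + 1 ∨ l = j + 1 ∧ i = j + 1 := by grind
  · exact hrim i (eq_rimHyperplane x_eq y_eq hubs)
  · exact hrim j (eq_rimHyperplane x_eq (pair_comm _ j ▸ y_eq) hubs)

lemma exists_injOn_mem_freeCoords_sdiff_slopeCoords (hm : 3 ≤ m) (hS : #S = m + 1)
    (hrim : ∀ k, S ≠ rimHyperplane k) (hhub : ∀ k, S ≠ hubHyperplane k) :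
    ∃ s : ZMod m → Option (ZMod m), Set.InjOn s S.toRight.toLeft ∧
      ∀ i ∈ S.toRight.toLeft, s i ∈ freeCoords S \ slopeCoords i :=
  exists_injOn_mem_sdiff (by rw [card_freeCoords hS]; lia)
    (fun _ ↦ freeCoords_sdiff_slopeCoords_nonempty hm hS hhub)
    (two_le_card_freeCoords_sdiff hm hS hrim) fun _ _ _ ↦ slopeCoords_inter_eq_empty

end Matching

section GenericSets

variable {m : ℕ}

lemma kinserVector_zero_zero_single {R : Type*} [CommRing R] {s : ZMod m → Option (ZMod m)}
    {i : ZMod m} (hs : s i ∉ slopeCoords i) :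
    kinserVector 0 0 (fun i ↦ Pi.single (s i) (1 : R)) (.inr (.inl i)) = Pi.single (s i) 1 := by
  simp only [slopeCoords, mem_insert, mem_singleton, not_or] at hs
  simp only [kinserVector, Pi.zero_apply, mul_zero]
  rw [Function.update_eq_self_iff.2, Function.update_eq_self_iff.2]
  · simp [Ne.symm hs.1]
  · simp [Function.update_apply, Ne.symm hs.2]

lemma kinserVector_hub_apply_ne_zero {K : Type*} [Field K] [NeZero (2 : K)] (a b : ZMod m → K)
    (c : ZMod m → Option (ZMod m) → K) (t : Bool) (z : Option (ZMod m)) :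
    kinserVector a b c (.inr (.inr t)) z ≠ 0 := by
  rcases z with _ | j <;> cases t <;> simp [kinserVector, two_ne_zero]

variable [NeZero m] {S : Finset (KinserGround m)}

lemma apply_eq_zero_of_notMem_freeCoords {K : Type*} [Field K] {a b : ZMod m → K}
    {c : ZMod m → Option (ZMod m) → K} {f : Option (ZMod m) → K}
    (hf : ∀ s ∈ S, kinserVector a b c s ⬝ᵥ f = 0) {z : Option (ZMod m)}
    (hz : z ∉ freeCoords S) : f z = 0 := by
  rcases z with _ | j
  · rw [none_mem_freeCoords, not_ne_iff] at hz
    refine eq_zero_of_kinserVector_hub_dotProduct_eq_zero (a := a) (b := b) (c := c) fun t ↦ ?_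
    exact hf _ (mem_toRight.1 (mem_toRight.1 (hz ▸ mem_univ t)))
  · rw [some_mem_freeCoords, not_not] at hz
    simpa only [kinserVector_inl_dotProduct] using hf _ hz

lemma eq_zero_of_dotProduct_eq_zero {ι K : Type*} [Fintype ι] [Field K] {v f : ι → K} {i : ι}
    (hv : v i ≠ 0) (hf : ∀ j, j ≠ i → f j = 0) (hvf : v ⬝ᵥ f = 0) : f = 0 := by
  rw [dotProduct, Fintype.sum_eq_single i fun j hj ↦ by rw [hf j hj, mul_zero],
    mul_eq_zero_iff_left hv] at hvf
  refine funext fun j ↦ ?_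
  rcases eq_or_ne j i with rfl | hj
  exacts [hvf, hf j hj]

lemma exists_linearIndepOn_kinserVector (K : Type*) [Field K] [NeZero (2 : K)] (hm : 3 ≤ m)
    (hS : #S = m + 1) (hrim : ∀ k, S ≠ rimHyperplane k) (hhub : ∀ k, S ≠ hubHyperplane k) :
    ∃ c : ZMod m → Option (ZMod m) → K, LinearIndepOn K (kinserVector 0 0 c) S := by
  obtain ⟨s, s_inj, s_mem⟩ := exists_injOn_mem_freeCoords_sdiff_slopeCoords hm hS hrim hhub
  simp only [mem_sdiff] at s_mem
  refine ⟨fun i ↦ Pi.single (s i) 1, ?_⟩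
  rw [linearIndepOn_iff_forall_dotProduct (by simp [hS])]
  intro f hf
  have f_s (i) (hi : i ∈ S.toRight.toLeft) : f (s i) = 0 := by
    simpa [kinserVector_zero_zero_single (s_mem i hi).2] using
      hf _ (mem_toRight.1 (mem_toLeft.1 hi))
  let spanned := S.toRight.toLeft.image s
  have f_zero (z) (hz : z ∉ freeCoords S \ spanned) : f z = 0 := by
    by_cases h : z ∈ spanned
    · obtain ⟨i, hi, rfl⟩ := mem_image.1 h
      exact f_s i hi
    · exact apply_eq_zero_of_notMem_freeCoords hf fun hz' ↦ hz (mem_sdiff.2 ⟨hz', h⟩)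
  have spanned_subset : spanned ⊆ freeCoords S := image_subset_iff.2 fun i hi ↦ (s_mem i hi).1
  have card_left : #(freeCoords S \ spanned) = if S.toRight.toRight = ∅ then 0 else 1 := by
    rw [card_sdiff_of_subset spanned_subset, card_freeCoords hS, card_image_of_injOn s_inj,
      Nat.add_sub_cancel_left]
  rcases S.toRight.toRight.eq_empty_or_nonempty with hempty | ⟨t, ht⟩
  · rw [if_pos hempty, card_eq_zero] at card_left
    exact funext fun z ↦ f_zero z (by simp [card_left])
  · rw [if_neg (ne_empty_of_mem ht), card_eq_one] at card_left
    obtain ⟨z₀, hz₀⟩ := card_left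
    simp only [hz₀, mem_singleton] at f_zero
    exact eq_zero_of_dotProduct_eq_zero (kinserVector_hub_apply_ne_zero _ _ _ t z₀) f_zero
      (hf _ (mem_toRight.1 (mem_toRight.1 ht)))

end GenericSets

section GenericRepresentation

open MvPolynomial

variable {m : ℕ} {k : Type*} [Field k]

/-- The vectors `kinserVector` with slopes proportional to `a` and `b`, in which the common factor
of the slopes and the entries supplied by `c` are independent variables. -/
noncomputable def genericKinserVector (a b : ZMod m → k) :
    KinserGround m → Option (ZMod m) → MvPolynomial (Option (ZMod m × Option (ZMod m))) k :=
  kinserVector (fun i ↦ X none * C (a i)) (fun i ↦ X none * C (b i)) fun i z ↦ X (some (i, z))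

lemma comp_genericKinserVector {R : Type*} [CommRing R] (a b : ZMod m → k)
    (φ : MvPolynomial (Option (ZMod m × Option (ZMod m))) k →+* R) :
    (fun s ↦ φ ∘ genericKinserVector a b s) =
      kinserVector (fun i ↦ φ (X none * C (a i))) (fun i ↦ φ (X none * C (b i)))
        fun i z ↦ φ (X (some (i, z))) :=
  funext fun s ↦ comp_kinserVector φ _ _ _ s

variable [NeZero m]

lemma linearIndepOn_genericKinserVector [NeZero (2 : k)] (hm : 3 ≤ m) {a b : ZMod m → k}
    {K : Type*} [Field K] {ψ : MvPolynomial (Option (ZMod m × Option (ZMod m))) k →+* K}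
    (hψ : Function.Injective ψ) {S : Finset (KinserGround m)} (hS : #S = m + 1) :
    LinearIndepOn K (fun s ↦ ψ ∘ genericKinserVector a b s) S ↔
      S ∉ hyperplaneFamily {i | b i = a (i + 1)} {i | a i = b i} := by
  have slope_inj (x y : k) : ψ (X none * C x) = ψ (X none * C y) ↔ x = y := by
    rw [hψ.eq_iff, mul_right_inj' (X_ne_zero none), C_inj]
  have weight_ne_zero (i : ZMod m) : ψ (X (some (i, none))) ≠ 0 :=
    (map_ne_zero_iff ψ hψ).2 (X_ne_zero _)
  by_cases! hrim : ∃ i, S = rimHyperplane i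
  · obtain ⟨i, rfl⟩ := hrim
    rw [comp_genericKinserVector, linearIndepOn_rimHyperplane_iff hm weight_ne_zero, ne_eq,
      slope_inj, rimHyperplane_mem_hyperplaneFamily, Set.mem_ofPred_eq]
  by_cases! hhub : ∃ i, S = hubHyperplane i
  · obtain ⟨i, rfl⟩ := hhub
    rw [comp_genericKinserVector, linearIndepOn_hubHyperplane_iff hm weight_ne_zero, ne_eq,
      slope_inj, hubHyperplane_mem_hyperplaneFamily, Set.mem_ofPred_eq]
  refine iff_of_true ?_ ?_
  · obtain ⟨c, hc⟩ := exists_linearIndepOn_kinserVector k hm hS hrim hhub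
    refine linearIndepOn_comp_of_linearIndepOn_comp
      (eval (Option.elim · 0 fun z ↦ c z.1 z.2)) hψ (by simp [hS]) ?_
    simpa [comp_genericKinserVector, ← Pi.zero_def] using hc
  · rintro (⟨i, -, rfl⟩ | ⟨i, -, rfl⟩)
    exacts [hrim i rfl, hhub i rfl]

lemma memKinserClass_kinserMatroid [NeZero (2 : k)] (hm : 3 ≤ m) (a b : ZMod m → k) {n : ℕ}
    (hn : 3 ≤ n) : (kinserMatroid hm {i | b i = a (i + 1)} {i | a i = b i}).MemKinserClass n := by
  let K := FractionRing (MvPolynomial (Option (ZMod m × Option (ZMod m))) k)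
  have isRepOver : (kinserMatroid hm {i | b i = a (i + 1)} {i | a i = b i}).IsRepOver K :=
    isRepOver_sparsePaving _ (W := Option (ZMod m) → K) (by simp) (by simp) _ fun _ hS ↦
      linearIndepOn_genericKinserVector hm (IsFractionRing.injective _ K) hS
  exact isRepOver.memKinserClass hn

end GenericRepresentation

section Slopes

variable {m : ℕ} [NeZero m]

lemma zmod_val_add_one (i : ZMod m) : (i + 1).val = if i.val + 1 = m then 0 else i.val + 1 := by
  have hi := i.val_lt
  rw [ZMod.val_add, ZMod.val_one_eq_one_mod, Nat.add_mod_mod]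
  split_ifs with h
  · rw [h, Nat.mod_self]
  · exact Nat.mod_eq_of_lt (by lia)

lemma memKinserClass_kinserMatroid_compl_singleton (hm : 3 ≤ m) (k : ZMod m) {n : ℕ}
    (hn : 3 ≤ n) : (kinserMatroid hm {k}ᶜ {0}ᶜ).MemKinserClass n := by
  -- Around the cycle, the slope jumps up between `a 0` and `b 0`, and down between `b k` and
  -- `a (k + 1)`.
  let b (i : ZMod m) : ℚ := if i.val ≤ k.val then 1 else 0
  let a (i : ZMod m) : ℚ := if i = 0 then 0 else b i
  have rim_eq : {i | b i = a (i + 1)} = {k}ᶜ := by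
    ext i
    have := i.val_lt
    have := k.val_lt
    simp only [Set.mem_ofPred_eq, Set.mem_compl_singleton_iff, ne_eq, a, b,
      ← (ZMod.val_injective m).eq_iff, zmod_val_add_one, ZMod.val_zero]
    grind
  have hub_eq : {i | a i = b i} = {0}ᶜ := by
    ext i
    by_cases hi : i = 0 <;> simp [a, b, hi]
  exact rim_eq ▸ hub_eq ▸ memKinserClass_kinserMatroid hm a b hn

lemma memKinserClass_kinserMatroid_compl_pair (hm : 3 ≤ m) {k : ZMod m} (hk : k ≠ 0) {n : ℕ}
    (hn : 3 ≤ n) : (kinserMatroid hm Set.univ {0, k}ᶜ).MemKinserClass n := by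
  -- Around the cycle, the slope jumps up between `a 0` and `b 0`, and down between `a k` and `b k`.
  let b (i : ZMod m) : ℚ := if i.val < k.val then 1 else 0
  let a (i : ZMod m) : ℚ := if i ≠ 0 ∧ i.val ≤ k.val then 1 else 0
  have k_ne_zero : k.val ≠ 0 := (ZMod.val_ne_zero k).2 hk
  have rim_eq : {i | b i = a (i + 1)} = Set.univ := by
    ext i
    have := k.val_lt
    simp only [Set.mem_ofPred_eq, Set.mem_univ, iff_true, ne_eq, a, b,
      ← (ZMod.val_injective m).eq_iff, zmod_val_add_one, ZMod.val_zero]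
    grind
  have hub_eq : {i | a i = b i} = {0, k}ᶜ := by
    ext i
    simp only [Set.mem_ofPred_eq, Set.mem_compl_iff, Set.mem_insert_iff, Set.mem_singleton_iff,
      ne_eq, a, b, ← (ZMod.val_injective m).eq_iff, ZMod.val_zero]
    grind
  exact rim_eq ▸ hub_eq ▸ memKinserClass_kinserMatroid hm a b hn

end Slopes

lemma memKinserClass_kinserMatroid_univ_compl_zero {m : ℕ} [NeZero m] (hm : 4 ≤ m) :
    (kinserMatroid (le_of_lt hm) Set.univ {(0 : ZMod m)}ᶜ).MemKinserClass m := by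
  refine memKinserClass_sparsePaving_of_relaxations _ (by lia) ?_ ?_
  · rw [ncard_hyperplaneFamily, Set.ncard_univ, Set.ncard_compl, Set.ncard_singleton,
      Nat.card_zmod]
    lia
  · rintro _ (⟨k, -, rfl⟩ | ⟨k, hk, rfl⟩)
    · simp only [hyperplaneFamily_sdiff_rimHyperplane, ← Set.compl_eq_univ_sdiff]
      exact memKinserClass_kinserMatroid_compl_singleton (le_of_lt hm) k (by lia)
    · have compl_sdiff : ({0}ᶜ \ {k} : Set (ZMod m)) = {0, k}ᶜ := by
        rw [Set.sdiff_eq, ← Set.compl_union, Set.singleton_union]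
      simp only [hyperplaneFamily_sdiff_hubHyperplane, compl_sdiff]
      exact memKinserClass_kinserMatroid_compl_pair (le_of_lt hm) hk (by lia)

end Matroid

/-- For every `n ≥ 5` the containment `K n ⊆ K (n-1)` is proper: there is a finite matroid
in `K (n-1)` that is not in `K n`. -/
theorem Matroid.exists_memKinserClass_pred_not_memKinserClass {n : ℕ} (hn : 5 ≤ n) :
    ∃ (α : Type) (M : Matroid α), M.Finite ∧ M.MemKinserClass (n - 1) ∧
      ¬ M.MemKinserClass n := by
  obtain ⟨m, rfl⟩ := Nat.exists_eq_add_of_le' (Nat.one_le_of_lt hn)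
  have hm : 4 ≤ m := Nat.le_of_succ_le_succ hn
  have : NeZero m := ⟨by lia⟩
  exact ⟨KinserGround m, kinserMatroid (le_of_lt hm) Set.univ {0}ᶜ, inferInstance,
    memKinserClass_kinserMatroid_univ_compl_zero hm,
    not_memKinserClass_kinserMatroid (le_of_lt hm)⟩
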